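/- SATWAP SOS verification: let d ≥ 2 and let A_1, A_2, B_1, B_2 be unitary operators on a finite-dimensional Hilbert space with A_x^d = B_y^d = 1 for all x,y, such that every power of each A_x commutes with every power of each B_y. With a_k = exp(2πi(2k−d)/(8d))/√2, define C_1^{(k)} = a_k B_1^{−k} + conj(a_k) ω^k B_2^{−k} and C_2^{(k)} = conj(a_k) B_1^{−k} + a_k B_2^{−k}, where ω = exp(2πi/d), and define the Bell operator B_d = Σ_{k=1}^{d−1} (A_1^k C_1^{(k)} + A_2^k C_2^{(k)}). Then 2(d−1)·1 − B_d = (1/2) Σ_{k=1}^{d−1} (P_{1,k}† P_{1,k} + P_{2,k}† P_{2,k}) where P_{x,k} = (A_x^k)† − C_x^{(k)}. In particular ⟨ψ, B_d ψ⟩ ≤ 2(d−1) for every unit vector ψ. -/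

import Mathlib

open Matrix

lemma aux_pow_unit {R : Type*} [Ring R] [StarRing R] (U : R)
    (h : star U * U = 1 ∧ U * star U = 1) (k : ℕ) :
    star U ^ k * U ^ k = 1 ∧ U ^ k * star U ^ k = 1 := by
  have hc : Commute (star U) U := by rw [Commute, SemiconjBy, h.1, h.2]
  constructor
  · rw [← hc.mul_pow, h.1, one_pow]
  · rw [← hc.symm.mul_pow, h.2, one_pow]

lemma aux_star_pow {R : Type*} [Ring R] [StarRing R] (U : R)
    (h : star U * U = 1 ∧ U * star U = 1) (d : ℕ) (hd : U ^ d = 1) (k : ℕ) (hk : k ≤ d) :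
    star U ^ (d - k) = U ^ k := by
  have h1 : star U ^ d = 1 := by rw [← star_pow, hd, star_one]
  calc star U ^ (d - k) = star U ^ (d - k) * (star U ^ k * U ^ k) := by
        rw [(aux_pow_unit U h k).1, mul_one]
    _ = star U ^ d * U ^ k := by rw [← mul_assoc, ← pow_add, Nat.sub_add_cancel hk]
    _ = U ^ k := by rw [h1, one_mul]

lemma aux_coef (d k : ℕ) (hd : 2 ≤ d) (hk : k ≤ d) (a : ℕ → ℂ)
    (ha : ∀ k : ℕ, a k = Complex.exp
      (2 * (Real.pi : ℂ) * Complex.I * (2 * (k : ℂ) - (d : ℂ)) / (8 * (d : ℂ)))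
        / (Real.sqrt 2 : ℂ))
    (ω : ℂ) (hω : ω = Complex.exp (2 * (Real.pi : ℂ) * Complex.I / (d : ℂ))) :
    a (d - k) = (starRingEnd ℂ) (a k) ∧
    (starRingEnd ℂ) (ω ^ k) = ω ^ (d - k) ∧
    (starRingEnd ℂ) (ω ^ k) * ω ^ k = 1 ∧
    (starRingEnd ℂ) (a k) * a k = 1 / 2 ∧
    (starRingEnd ℂ) (a k) * (starRingEnd ℂ) (a k) * ω ^ k + a k * a k = 0 := by
  have hd0 : (d : ℂ) ≠ 0 := by
    have : d ≠ 0 := by omega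
    exact_mod_cast this
  have hs : (Real.sqrt 2 : ℂ) * (Real.sqrt 2 : ℂ) = 2 := by
    rw [← Complex.ofReal_mul, Real.mul_self_sqrt (by norm_num)]; norm_num
  have hs0 : (Real.sqrt 2 : ℂ) ≠ 0 := by
    intro h; rw [h] at hs; norm_num at hs
  have hconj : (starRingEnd ℂ) (a k) = Complex.exp
      (-(2 * (Real.pi : ℂ) * Complex.I * (2 * (k : ℂ) - (d : ℂ)) / (8 * (d : ℂ))))
        / (Real.sqrt 2 : ℂ) := by
    rw [ha, map_div₀, ← Complex.exp_conj, Complex.conj_ofReal]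
    congr 2
    simp only [map_div₀, map_mul, map_sub, Complex.conj_ofReal, Complex.conj_I, map_natCast,
      map_ofNat]
    ring
  have hωk : ∀ j : ℕ, ω ^ j = Complex.exp (j * (2 * (Real.pi : ℂ) * Complex.I / (d : ℂ))) := by
    intro j; rw [hω, ← Complex.exp_nat_mul]
  have hωc : (starRingEnd ℂ) (ω ^ k) =
      Complex.exp (-(k * (2 * (Real.pi : ℂ) * Complex.I / (d : ℂ)))) := by
    rw [hωk, ← Complex.exp_conj]
    congr 1
    simp only [map_div₀, map_mul, Complex.conj_ofReal, Complex.conj_I, map_natCast,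
      map_ofNat]
    ring
  have hωd : ω ^ d = 1 := by
    rw [hωk, mul_div_cancel₀ _ hd0, Complex.exp_two_pi_mul_I]
  have hinv : (starRingEnd ℂ) (ω ^ k) * ω ^ k = 1 := by
    rw [hωc, hωk, ← Complex.exp_add, neg_add_cancel, Complex.exp_zero]
  refine ⟨?_, ?_, hinv, ?_, ?_⟩
  · rw [hconj, ha, Nat.cast_sub hk]
    congr 2
    ring
  · calc (starRingEnd ℂ) (ω ^ k) = (starRingEnd ℂ) (ω ^ k) * (ω ^ k * ω ^ (d - k)) := by
          rw [← pow_add, Nat.add_sub_cancel' hk, hωd, mul_one]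
      _ = _ := by rw [← mul_assoc, hinv, one_mul]
  · rw [hconj, ha, div_mul_div_comm, ← Complex.exp_add, neg_add_cancel, Complex.exp_zero, hs]
  · rw [hconj, ha, hωk, div_mul_div_comm, div_mul_div_comm, hs, div_mul_eq_mul_div, ← Complex.exp_add,
      ← Complex.exp_add, ← Complex.exp_add, ← add_div]
    have : -(2 * (Real.pi : ℂ) * Complex.I * (2 * (k : ℂ) - (d : ℂ)) / (8 * (d : ℂ))) +
        -(2 * (Real.pi : ℂ) * Complex.I * (2 * (k : ℂ) - (d : ℂ)) / (8 * (d : ℂ))) +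
        k * (2 * (Real.pi : ℂ) * Complex.I / (d : ℂ)) =
        (2 * (Real.pi : ℂ) * Complex.I * (2 * (k : ℂ) - (d : ℂ)) / (8 * (d : ℂ)) +
        2 * (Real.pi : ℂ) * Complex.I * (2 * (k : ℂ) - (d : ℂ)) / (8 * (d : ℂ))) +
        Real.pi * Complex.I := by
      field_simp
      ring
    rw [this, Complex.exp_add, Complex.exp_pi_mul_I]
    ring

lemma aux_comm {R : Type*} [Ring R] [StarRing R] (A B : R) (d : ℕ) (hd : 2 ≤ d)
    (h : star B * B = 1 ∧ B * star B = 1) (hB : B ^ d = 1)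
    (hc : ∀ j k : ℕ, Commute (A ^ j) (B ^ k)) (j k : ℕ) :
    Commute (A ^ j) (star B ^ k) := by
  have h1 := aux_star_pow B h d hB (d - 1) (by omega)
  rw [Nat.sub_sub_self (by omega), pow_one] at h1
  rw [h1, ← pow_mul]
  exact hc _ _

lemma aux_CC {n : ℕ} (b b' e e' X Y : Matrix (Fin n) (Fin n) ℂ) (z z' w w' : ℂ)
    (hX : X = z • b + (z' * w) • e) (hY : Y = z' • b + z • e)
    (hz : star z = z') (hz' : star z' = z) (hw : star w = w')
    (hb : star b = b') (he : star e = e') (hbb : b' * b = 1) (hee : e' * e = 1)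
    (h1 : z' * z = 1 / 2) (h2 : w' * w = 1) (h3 : z' * z' * w + z * z = 0)
    (h3' : z * z * w' + z' * z' = 0) :
    star X * X + star Y * Y = (2 : ℂ) • (1 : Matrix (Fin n) (Fin n) ℂ) := by
  have e1 : star X * X + star Y * Y = (2 * (z' * z)) • (b' * b)
      + (z' * z * (w' * w) + z' * z) • (e' * e) + (z' * z' * w + z * z) • (b' * e)
      + (z * z * w' + z' * z') • (e' * b) := by
    rw [hX, hY]
    simp only [star_add, star_smul, star_mul', hz, hz', hw, hb, he, add_mul, mul_add,
      smul_mul_assoc, mul_smul_comm, smul_smul]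
    module
  rw [e1, hbb, hee, h1, h2, h3, h3']
  module

open scoped ComplexOrder in
lemma aux_nonneg {n : ℕ} (s : Finset ℕ) (P1 P2 : ℕ → Matrix (Fin n) (Fin n) ℂ)
    (ψ : Fin n → ℂ) :
    0 ≤ (star ψ ⬝ᵥ (∑ k ∈ s, (star (P1 k) * P1 k + star (P2 k) * P2 k)).mulVec ψ).re := by
  have hpsd : (∑ k ∈ s, (star (P1 k) * P1 k + star (P2 k) * P2 k)).PosSemidef := by
    refine Matrix.posSemidef_sum _ fun k _ => ?_
    exact (Matrix.posSemidef_conjTranspose_mul_self (P1 k)).add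
      (Matrix.posSemidef_conjTranspose_mul_self (P2 k))
  have hnn := (Complex.le_def.1 (hpsd.dotProduct_mulVec_nonneg ψ)).1
  rwa [Complex.zero_re] at hnn

/-- SATWAP SOS verification: the shifted SATWAP Bell operator equals the
sum-of-squares `(1/2) Σ_k (P_{1,k}† P_{1,k} + P_{2,k}† P_{2,k})`; in
particular `⟨ψ, B_d ψ⟩ ≤ 2(d−1)` for unit vectors `ψ`. -/
theorem satwap_sos_verification {d nn : ℕ} (hd : 2 ≤ d)
    (A1 A2 B1 B2 : Matrix (Fin nn) (Fin nn) ℂ)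
    (hA1u : star A1 * A1 = 1 ∧ A1 * star A1 = 1)
    (hA2u : star A2 * A2 = 1 ∧ A2 * star A2 = 1)
    (hB1u : star B1 * B1 = 1 ∧ B1 * star B1 = 1)
    (hB2u : star B2 * B2 = 1 ∧ B2 * star B2 = 1)
    (hA1d : A1 ^ d = 1) (hA2d : A2 ^ d = 1) (hB1d : B1 ^ d = 1) (hB2d : B2 ^ d = 1)
    (hcomm : ∀ j k : ℕ, Commute (A1 ^ j) (B1 ^ k) ∧ Commute (A1 ^ j) (B2 ^ k) ∧
      Commute (A2 ^ j) (B1 ^ k) ∧ Commute (A2 ^ j) (B2 ^ k))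
    (a : ℕ → ℂ)
    (ha : ∀ k : ℕ, a k = Complex.exp
      (2 * (Real.pi : ℂ) * Complex.I * (2 * (k : ℂ) - (d : ℂ)) / (8 * (d : ℂ)))
        / (Real.sqrt 2 : ℂ))
    (ω : ℂ) (hω : ω = Complex.exp (2 * (Real.pi : ℂ) * Complex.I / (d : ℂ)))
    (C1 C2 P1 P2 : ℕ → Matrix (Fin nn) (Fin nn) ℂ)
    (hC1 : ∀ k, C1 k = a k • (star B1) ^ k + ((starRingEnd ℂ) (a k) * ω ^ k) • (star B2) ^ k)
    (hC2 : ∀ k, C2 k = (starRingEnd ℂ) (a k) • (star B1) ^ k + a k • (star B2) ^ k)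
    (Bell : Matrix (Fin nn) (Fin nn) ℂ)
    (hBell : Bell = ∑ k ∈ Finset.Icc 1 (d - 1), (A1 ^ k * C1 k + A2 ^ k * C2 k))
    (hP1 : ∀ k, P1 k = star (A1 ^ k) - C1 k)
    (hP2 : ∀ k, P2 k = star (A2 ^ k) - C2 k) :
    ((2 * ((d : ℂ) - 1)) • (1 : Matrix (Fin nn) (Fin nn) ℂ) - Bell =
      (1/2 : ℂ) • ∑ k ∈ Finset.Icc 1 (d - 1),
        (star (P1 k) * P1 k + star (P2 k) * P2 k)) ∧
    (∀ ψ : Fin nn → ℂ, star ψ ⬝ᵥ ψ = 1 →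
      (star ψ ⬝ᵥ Bell.mulVec ψ).re ≤ 2 * ((d : ℝ) - 1)) := by
  have key : ∀ k ∈ Finset.Icc 1 (d - 1), star (P1 k) * P1 k + star (P2 k) * P2 k =
      (4 : ℂ) • (1 : Matrix (Fin nn) (Fin nn) ℂ) - (A1 ^ k * C1 k + A2 ^ k * C2 k)
        - (A1 ^ (d - k) * C1 (d - k) + A2 ^ (d - k) * C2 (d - k)) := by
    intro k hk
    rw [Finset.mem_Icc] at hk
    have hkd : k ≤ d := by omega
    obtain ⟨c1, c2, c3, c4, c5⟩ := aux_coef d k hd hkd a ha ω hω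
    have c5' : a k * a k * (starRingEnd ℂ) (ω ^ k)
        + (starRingEnd ℂ) (a k) * (starRingEnd ℂ) (a k) = 0 := by
      have := congrArg (starRingEnd ℂ) c5
      simpa only [map_add, map_mul, Complex.conj_conj, map_zero] using this
    have hCC := aux_CC (star B1 ^ k) (B1 ^ k) (star B2 ^ k) (B2 ^ k) (C1 k) (C2 k)
      (a k) ((starRingEnd ℂ) (a k)) (ω ^ k) ((starRingEnd ℂ) (ω ^ k)) (hC1 k) (hC2 k)
      rfl (Complex.conj_conj _) rfl (by rw [star_pow, star_star]) (by rw [star_pow, star_star])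
      (aux_pow_unit B1 hB1u k).2 (aux_pow_unit B2 hB2u k).2 c4 c3 c5 c5'
    have sA : ∀ A : Matrix (Fin nn) (Fin nn) ℂ, star A * A = 1 ∧ A * star A = 1 → A ^ d = 1 →
        star (A ^ k) = A ^ (d - k) := by
      intro A hA hAd
      have := aux_star_pow A hA d hAd (d - k) (by omega)
      rwa [Nat.sub_sub_self hkd, ← star_pow] at this
    have sC1 : star (C1 k) = C1 (d - k) := by
      rw [hC1, hC1, aux_star_pow B1 hB1u d hB1d k hkd, aux_star_pow B2 hB2u d hB2d k hkd, c1,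
        Complex.conj_conj, ← c2, star_add, star_smul, star_smul, star_pow, star_pow, star_star,
        star_star]
      congr 2
      simp
    have sC2 : star (C2 k) = C2 (d - k) := by
      rw [hC2, hC2, aux_star_pow B1 hB1u d hB1d k hkd, aux_star_pow B2 hB2u d hB2d k hkd, c1,
        Complex.conj_conj, star_add, star_smul, star_smul, star_pow, star_pow, star_star,
        star_star]
      congr 2
      simp
    have m1 : Commute (A1 ^ (d - k)) (C1 (d - k)) := by
      rw [hC1]
      exact ((aux_comm A1 B1 d hd hB1u hB1d (fun i j => (hcomm i j).1) _ _).smul_right _).add_right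
        ((aux_comm A1 B2 d hd hB2u hB2d (fun i j => (hcomm i j).2.1) _ _).smul_right _)
    have m2 : Commute (A2 ^ (d - k)) (C2 (d - k)) := by
      rw [hC2]
      exact ((aux_comm A2 B1 d hd hB1u hB1d (fun i j => (hcomm i j).2.2.1) _ _).smul_right
        _).add_right
        ((aux_comm A2 B2 d hd hB2u hB2d (fun i j => (hcomm i j).2.2.2) _ _).smul_right _)
    have u1 : A1 ^ k * star (A1 ^ k) = 1 := by rw [star_pow]; exact (aux_pow_unit A1 hA1u k).2
    have u2 : A2 ^ k * star (A2 ^ k) = 1 := by rw [star_pow]; exact (aux_pow_unit A2 hA2u k).2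
    have x1 : star (C1 k) * star (A1 ^ k) = A1 ^ (d - k) * C1 (d - k) := by
      rw [sC1, sA A1 hA1u hA1d, m1.eq]
    have x2 : star (C2 k) * star (A2 ^ k) = A2 ^ (d - k) * C2 (d - k) := by
      rw [sC2, sA A2 hA2u hA2d, m2.eq]
    have e : star (P1 k) * P1 k + star (P2 k) * P2 k =
        A1 ^ k * star (A1 ^ k) + A2 ^ k * star (A2 ^ k)
        - (A1 ^ k * C1 k + A2 ^ k * C2 k)
        - (star (C1 k) * star (A1 ^ k) + star (C2 k) * star (A2 ^ k))
        + (star (C1 k) * C1 k + star (C2 k) * C2 k) := by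
      rw [hP1, hP2, star_sub, star_sub, star_star, star_star]
      noncomm_ring
    rw [e, hCC, x1, x2, u1, u2]
    module
  have hrefl : ∑ k ∈ Finset.Icc 1 (d - 1),
      (A1 ^ (d - k) * C1 (d - k) + A2 ^ (d - k) * C2 (d - k)) = Bell := by
    rw [hBell]
    refine Finset.sum_nbij' (fun k => d - k) (fun k => d - k) ?_ ?_ ?_ ?_ ?_
    · intro k hk; simp only [Finset.mem_Icc] at hk ⊢; omega
    · intro k hk; simp only [Finset.mem_Icc] at hk ⊢; omega
    · intro k hk; simp only [Finset.mem_Icc] at hk ⊢; omega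
    · intro k hk; simp only [Finset.mem_Icc] at hk ⊢; omega
    · intro k hk; rfl
  have main : (2 * ((d : ℂ) - 1)) • (1 : Matrix (Fin nn) (Fin nn) ℂ) - Bell =
      (1/2 : ℂ) • ∑ k ∈ Finset.Icc 1 (d - 1),
        (star (P1 k) * P1 k + star (P2 k) * P2 k) := by
    rw [Finset.sum_congr rfl key, Finset.sum_sub_distrib, Finset.sum_sub_distrib, hrefl, ← hBell,
      Finset.sum_const, Nat.card_Icc, Nat.add_sub_cancel, ← Nat.cast_smul_eq_nsmul ℂ,
      Nat.cast_sub (by omega), Nat.cast_one]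
    module
  refine ⟨main, ?_⟩
  intro ψ hψ
  have hB : Bell = (2 * ((d : ℂ) - 1)) • (1 : Matrix (Fin nn) (Fin nn) ℂ) -
      (1/2 : ℂ) • ∑ k ∈ Finset.Icc 1 (d - 1),
        (star (P1 k) * P1 k + star (P2 k) * P2 k) := by
    rw [← main]; abel
  have hnn := aux_nonneg (Finset.Icc 1 (d - 1)) P1 P2 ψ
  rw [hB, Matrix.sub_mulVec, Matrix.smul_mulVec, Matrix.smul_mulVec, Matrix.one_mulVec,
    dotProduct_sub, dotProduct_smul, dotProduct_smul, hψ, smul_eq_mul, smul_eq_mul, mul_one,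
    Complex.sub_re]
  have r1 : (2 * ((d : ℂ) - 1)).re = 2 * ((d : ℝ) - 1) := by simp
  have r2 : ∀ z : ℂ, ((1/2 : ℂ) * z).re = z.re / 2 := by
    intro z
    rw [show (1/2 : ℂ) = ((1/2 : ℝ) : ℂ) by norm_num, Complex.re_ofReal_mul]; ring
  rw [r1, r2]
  linarith
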